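/- For every finite rooted tree τ, the sum of squared branch sizes is at least the sum of squared distances: ∑_{v∈τ} b(v)² ≥ ∑_{v∈τ} d(v)². -/

import Mathlib

/-- Branch size of `v` in a tree with root `R`: the number of vertices `w` whose unique path
to `R` passes through `v` (i.e. the size of the subtree rooted at `v`). -/
noncomputable def branchSize {V : Type*} (G : SimpleGraph V) (R v : V) : ℕ :=
  ({w : V | G.dist w R = G.dist w v + G.dist v R} : Set V).ncard

/-- Distance number of `v`: the number of vertices on the path from `v` to the root `R`,
including both endpoints. -/
noncomputable def distNum {V : Type*} (G : SimpleGraph V) (R v : V) : ℕ :=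
  G.dist v R + 1

/-!
For a vertex `a` on a geodesic from `v` to the root, give the pair `(a, v)` the weight
`2 * dist v a + 1`, and compare the two ways of summing the weights. For fixed `v`, every distance
`0, …, d(v) - 1` occurs among the `a`, so the weights sum to at least `1 + 3 + ⋯ = d(v)²`. For fixed
`a`, the distances to the `b(a)` vertices `v` of its branch fill an initial segment of `ℕ`, so when
sorted they are at most `0, …, b(a) - 1`, and the weights sum to at most `b(a)²`. The odd numbers
may be replaced by any nonnegative monotone sequence.
-/

open Finset

section SumComp

variable {ι M : Type*} [AddCommMonoid M] [PartialOrder M] [IsOrderedAddMonoid M] {s : Finset ι}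

theorem sum_le_sum_comp_of_subset_image {κ : Type*} [DecidableEq κ] {t : Finset κ} {f : ι → κ}
    {g : κ → M} (hg : ∀ k, 0 ≤ g k) (hf : t ⊆ s.image f) :
    ∑ k ∈ t, g k ≤ ∑ i ∈ s, g (f i) :=
  (sum_le_sum_of_subset_of_nonneg hf fun k _ _ ↦ hg k).trans
    (sum_image_le_of_nonneg fun k _ ↦ hg k)

theorem sum_comp_le_sum_range_card_of_isLowerSet_image {f : ι → ℕ} {g : ℕ → M}
    (hg : Monotone g) (hf : IsLowerSet (f '' s)) : ∑ i ∈ s, g (f i) ≤ ∑ k ∈ range #s, g k := by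
  classical
  induction s using induction_on_max_value f with
  | empty => simp
  | insert a s ha hmax ih =>
    have exists_of_lt {k : ℕ} (hk : k < f a) : ∃ i ∈ s, f i = k := by
      obtain ⟨i, hi, rfl⟩ := hf hk.le ⟨a, by simp, rfl⟩
      exact ⟨i, mem_of_mem_insert_of_ne hi (by rintro rfl; exact hk.false), rfl⟩
    have hs : IsLowerSet (f '' s) := by
      rintro _ k hk ⟨i, hi, rfl⟩
      obtain rfl | hlt := hk.eq_or_lt
      · exact ⟨i, hi, rfl⟩
      · exact exists_of_lt (hlt.trans_le (hmax i hi))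
    have hcard : f a ≤ #s := by
      simpa using card_le_card_of_surjOn f (s := s) (t := range (f a))
        fun k hk ↦ exists_of_lt (by simpa using hk)
    rw [sum_insert ha, card_insert_of_notMem ha, sum_range_succ, add_comm]
    exact add_le_add (ih hs) (hg hcard)

end SumComp

theorem sum_range_two_mul_add_one (n : ℕ) : ∑ k ∈ range n, (2 * k + 1) = n ^ 2 := by
  induction n with
  | zero => simp
  | succ n ih => rw [sum_range_succ, ih]; ring

section Graph

variable {V : Type*} {G : SimpleGraph V}

theorem exists_dist_eq_and_dist_eq_add_of_le_dist {u v : V} {k : ℕ} (huv : G.Reachable u v)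
    (hk : k ≤ G.dist u v) : ∃ w, G.dist u w = k ∧ G.dist u v = G.dist u w + G.dist w v := by
  obtain ⟨p, hp⟩ := huv.exists_walk_length_eq_dist
  have htake := G.dist_le (p.take k)
  have hdrop := G.dist_le (p.drop k)
  have htri := (p.take k).reachable.dist_triangle_left v
  rw [p.take_length] at htake
  rw [p.drop_length] at hdrop
  exact ⟨p.getVert k, by lia, by lia⟩

variable [Fintype V]

/-- The vertices `w` having `v` on a geodesic to `R`; in a tree with root `R`, the subtree rooted
at `v`. It is the set counted by `branchSize`, as a `Finset`. -/
noncomputable def branch (G : SimpleGraph V) (R v : V) : Finset V :=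
  {w | G.dist w R = G.dist w v + G.dist v R}

/-- The vertices on geodesics from `v` to `R`, including both endpoints; in a tree with root `R`,
the ancestors of `v` together with `v` itself. -/
noncomputable def ancestors (G : SimpleGraph V) (R v : V) : Finset V :=
  {a | G.dist v R = G.dist v a + G.dist a R}

variable {R a v : V}

theorem mem_branch : v ∈ branch G R a ↔ G.dist v R = G.dist v a + G.dist a R := by
  simp [branch]

theorem mem_ancestors : a ∈ ancestors G R v ↔ G.dist v R = G.dist v a + G.dist a R := by
  simp [ancestors]

theorem card_branch (G : SimpleGraph V) (R v : V) : #(branch G R v) = branchSize G R v := by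
  simp [branch, branchSize, Set.ncard_eq_toFinset_card']

theorem range_distNum_subset_image_dist_ancestors (h : G.Reachable v R) :
    range (distNum G R v) ⊆ (ancestors G R v).image (G.dist v) := by
  intro k hk
  obtain ⟨a, rfl, ha⟩ :=
    exists_dist_eq_and_dist_eq_add_of_le_dist h (Nat.lt_succ_iff.1 (mem_range.1 hk))
  exact mem_image_of_mem _ (mem_ancestors.2 ha)

theorem isLowerSet_image_dist_branch (hG : G.Connected) (R a : V) :
    IsLowerSet ((G.dist · a) '' branch G R a) := by
  rintro _ k hk ⟨v, hv, rfl⟩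
  have hva : G.dist v R = G.dist v a + G.dist a R := mem_branch.1 hv
  obtain ⟨u, hvu, hu⟩ := exists_dist_eq_and_dist_eq_add_of_le_dist (hG v a) (Nat.sub_le _ k)
  have hvuR := hG.dist_triangle (u := v) (v := u) (w := R)
  have huaR := hG.dist_triangle (u := u) (v := a) (w := R)
  exact ⟨u, mem_branch.2 (by lia), by lia⟩

theorem sum_sq_dist_le_sum_sq_branch_general {M : Type*} [AddCommMonoid M] [PartialOrder M]
    [IsOrderedAddMonoid M] {g : ℕ → M} (hg₀ : 0 ≤ g 0) (hg : Monotone g) (hG : G.Connected)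
    (R : V) :
    ∑ v, ∑ k ∈ range (distNum G R v), g k ≤ ∑ v, ∑ k ∈ range (branchSize G R v), g k := by
  calc ∑ v, ∑ k ∈ range (distNum G R v), g k
      ≤ ∑ v, ∑ a ∈ ancestors G R v, g (G.dist v a) := sum_le_sum fun v _ ↦
        sum_le_sum_comp_of_subset_image (fun k ↦ hg₀.trans (hg k.zero_le))
          (range_distNum_subset_image_dist_ancestors (hG v R))
    _ = ∑ a, ∑ v ∈ branch G R a, g (G.dist v a) :=
        sum_comm' fun v a ↦ by simp [mem_ancestors, mem_branch]
    _ ≤ ∑ a, ∑ k ∈ range #(branch G R a), g k := sum_le_sum fun a _ ↦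
        sum_comp_le_sum_range_card_of_isLowerSet_image hg (isLowerSet_image_dist_branch hG R a)
    _ = ∑ a, ∑ k ∈ range (branchSize G R a), g k := by simp only [card_branch]

end Graph

theorem sum_sq_dist_le_sum_sq_branch {V : Type*} [Fintype V] (G : SimpleGraph V)
    (hG : G.IsTree) (R : V) :
    ∑ v : V, (distNum G R v) ^ 2 ≤ ∑ v : V, (branchSize G R v) ^ 2 := by
  have hodd : Monotone fun k : ℕ ↦ 2 * k + 1 := fun _ _ h ↦ by lia
  simpa only [sum_range_two_mul_add_one] using
    sum_sq_dist_le_sum_sq_branch_general (Nat.zero_le _) hodd hG.connected R
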